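/- If ρ(H^max) < 1, then ρ(H(k)) < 1 for every carrier k ∈ {1,…,N}; consequently game G admits exactly one Nash equilibrium. (Corollary 1: condition C2 is sufficient for condition C1.) -/

import Mathlib

/-!
The equilibria of `G` are exactly the fixed points of the simultaneous waterfilling map, and that
map is a contraction when `ρ(H^max) < 1`.

* Waterfilling is a best response, and the only one (`payoff_lt_of_isWFResp`). With
  `a k = Γ_q (1 + interference) / |H_qq(k)|²`, the payoff is a mean of `log (1 + p k / a k)`. The
  tangent inequality `log t < t - 1` at the waterfilling point `x` bounds the gain of a deviation
  `y` by the sum of `(y k - x k) / (a k + x k)`, and the variational inequality of the projection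
  bounds this sum by `∑ (y k - x k) / μ ≤ 0`.
* The projection onto an interval is firmly nonexpansive. Since all waterfilling responses have the
  same total power, the water levels drop out after summation over the carriers, and
  Cauchy–Schwarz gives `‖WF_q(p) - WF_q(p')‖ ≤ ∑ r, H^max_qr ‖p_r - p'_r‖` in the Euclidean norm
  for profiles in which each user `r` only loads carriers of `D_r` (`wf_lipschitz`).
* For a nonnegative matrix `A`, `ρ(A) < 1` produces a vector `w > 0` and `c < 1` with
  `A w ≤ c w` (`exists_weight`): Gelfand's formula gives `n` with `‖A ^ n‖ ≤ 1/2` in the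
  row-sum norm, and `w = ∑ i < n, A ^ i 1` works. In the maximum norm with weights `w` the
  waterfilling map is a contraction, so Banach's theorem gives existence of an equilibrium.
* If `A w ≤ c w` and `l d ≤ A d` for a nonzero `d ≥ 0`, then `l ≤ c` (`le_of_weight`). With `l = 1`
  this gives uniqueness of the equilibrium. Applied to the moduli of an eigenvector, it gives
  `ρ(H(k)) ≤ c`, since `H(k) ≤ H^max` entrywise.
-/


open scoped ENNReal

namespace NCGame

/-- The data of game `G`: `Q` users, `N` carriers, channel gains `chan r q k` (from source `r`
to destination `q` on carrier `k`), gap parameters `gap q ≥ 1`, and spectral-mask limits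
`pmax q k ∈ (0, ∞]`. -/
structure GameData (Q N : ℕ) where
  chan : Fin Q → Fin Q → Fin N → ℂ
  gap : Fin Q → ℝ
  pmax : Fin Q → Fin N → ℝ≥0∞
  chan_diag_ne : ∀ q k, chan q q k ≠ 0
  one_le_gap : ∀ q, 1 ≤ gap q
  pmax_pos : ∀ q k, 0 < pmax q k

namespace GameData

variable {Q N : ℕ}

/-- The strategy set `P_q` of user `q`: powers within the spectral mask whose average
does not exceed the power budget. -/
def stratSet (G : GameData Q N) (q : Fin Q) : Set (Fin N → ℝ) :=
  { p | (∀ k, 0 ≤ p k ∧ ENNReal.ofReal (p k) ≤ G.pmax q k) ∧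
        (1 / (N : ℝ)) * ∑ k, p k ≤ 1 }

/-- Interference-plus-noise `1 + Σ_{r ≠ q} |H_rq(k)|² p_r(k)` seen by user `q` on carrier `k`. -/
noncomputable def interf (G : GameData Q N) (q : Fin Q) (p : Fin Q → Fin N → ℝ)
    (k : Fin N) : ℝ :=
  1 + ∑ r ∈ Finset.univ.erase q, ‖G.chan r q k‖ ^ 2 * p r k

/-- The payoff `R_q(p)` of user `q` at the strategy profile `p`. -/
noncomputable def payoff (G : GameData Q N) (q : Fin Q) (p : Fin Q → Fin N → ℝ) : ℝ :=
  (1 / (N : ℝ)) * ∑ k, Real.log (1 +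
    (1 / G.gap q) * (‖G.chan q q k‖ ^ 2 * p q k) / G.interf q p k)

/-- `p` is a Nash equilibrium of game `G`. -/
def isNE (G : GameData Q N) (p : Fin Q → Fin N → ℝ) : Prop :=
  (∀ q, p q ∈ G.stratSet q) ∧
  ∀ q, ∀ pq ∈ G.stratSet q, G.payoff q (Function.update p q pq) ≤ G.payoff q p

end GameData

end NCGame

namespace NCGame

/-- Euclidean projection of `x` onto the interval `[0, b]`, where `b ∈ (0, ∞]`. -/
noncomputable def proj (x : ℝ) (b : ℝ≥0∞) : ℝ :=
  if b = ⊤ then max 0 x else min b.toReal (max 0 x)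

namespace GameData

variable {Q N : ℕ}

/-- `p` is an admissible strategy profile of the users other than `q` (the `q`-th component
is irrelevant). -/
def otherStrats (G : GameData Q N) (q : Fin Q) (p : Fin Q → Fin N → ℝ) : Prop :=
  ∀ r, r ≠ q → p r ∈ G.stratSet r

/-- `wf` is the waterfilling response `WF_q(p_{-q})` of user `q` to the strategies `p` of the
other users: there is a water level `μ` such that each component is the projection of
`μ − Γ_q (1 + Σ_{r≠q}|H_rq(k)|² p_r(k))/|H_qq(k)|²` onto `[0, p_q^max(k)]`, and the average
power equals `1`. -/
def isWFResp (G : GameData Q N) (q : Fin Q) (p : Fin Q → Fin N → ℝ)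
    (wf : Fin N → ℝ) : Prop :=
  (∃ μ : ℝ, ∀ k, wf k =
      proj (μ - G.gap q * G.interf q p k / ‖G.chan q q k‖ ^ 2) (G.pmax q k)) ∧
  (1 / (N : ℝ)) * ∑ k, wf k = 1

/-- The set `D_q` of carriers that user `q` can possibly use in a waterfilling best response
to some admissible strategy of the other users. -/
def Dset (G : GameData Q N) (q : Fin Q) : Set (Fin N) :=
  { k | ∃ p wf, G.otherStrats q p ∧ G.isWFResp q p wf ∧ wf k ≠ 0 }

open Classical in
/-- The matrix `H(k)` of normalized cross-channel gains. -/
noncomputable def Hmat (G : GameData Q N) (k : Fin N) : Matrix (Fin Q) (Fin Q) ℝ :=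
  fun q r =>
    if r ≠ q ∧ k ∈ G.Dset q ∧ k ∈ G.Dset r then
      G.gap q * ‖G.chan r q k‖ ^ 2 / ‖G.chan q q k‖ ^ 2
    else 0

end GameData

/-- Spectral radius of a real square matrix: the largest modulus of its (complex) spectrum. -/
noncomputable def specRad {Q : ℕ} (M : Matrix (Fin Q) (Fin Q) ℝ) : ℝ :=
  sSup ((fun z => ‖z‖) '' spectrum ℂ (M.map (Complex.ofReal ·)))

end NCGame

namespace NCGame.GameData

open Classical in
/-- The matrix `H^max` whose off-diagonal entries are the maxima over `D_q ∩ D_r` of the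
normalized cross-channel gains (`0` if the intersection is empty, since `sSup ∅ = 0` in `ℝ`). -/
noncomputable def Hmax {Q N : ℕ} (G : NCGame.GameData Q N) : Matrix (Fin Q) (Fin Q) ℝ :=
  fun q r =>
    if r ≠ q then
      sSup ((fun k => G.gap q * ‖G.chan r q k‖ ^ 2 / ‖G.chan q q k‖ ^ 2) ''
        (G.Dset q ∩ G.Dset r))
    else 0

end NCGame.GameData

namespace NCGame

/-! ### Nonnegative matrices and the spectral radius -/

lemma norm_le_specRad {Q : ℕ} (M : Matrix (Fin Q) (Fin Q) ℝ) {z : ℂ}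
    (hz : z ∈ spectrum ℂ (M.map (Complex.ofReal ·))) : ‖z‖ ≤ specRad M := by
  have hfin : (spectrum ℂ (M.map (Complex.ofReal ·))).Finite := Matrix.finite_spectrum _
  exact le_csSup (hfin.image _).bddAbove ⟨z, hz, rfl⟩

section

attribute [local instance] Matrix.linftyOpNormedRing Matrix.linftyOpNormedAlgebra

/-- Gelfand's formula for the row-sum norm, in the form of an explicit small power. -/
lemma exists_pow_norm_le {Q : ℕ} (hQ : 1 ≤ Q) (M : Matrix (Fin Q) (Fin Q) ℝ)
    (h : specRad M < 1) :
    ∃ n : ℕ, ‖(M.map (Complex.ofReal ·)) ^ n‖ ≤ 1 / 2 := by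
  have : Nonempty (Fin Q) := ⟨⟨0, hQ⟩⟩
  have : CompleteSpace (Matrix (Fin Q) (Fin Q) ℂ) := FiniteDimensional.complete ℂ _
  set A : Matrix (Fin Q) (Fin Q) ℂ := M.map (Complex.ofReal ·) with hA
  have hs : spectralRadius ℂ A < 1 := by
    obtain ⟨z, hz, hzr⟩ := spectrum.exists_nnnorm_eq_spectralRadius A
    rw [← hzr]
    have : ‖z‖ < 1 := (norm_le_specRad M hz).trans_lt h
    exact_mod_cast this
  obtain ⟨s, hs1, hs2⟩ := exists_between hs
  have ht := spectrum.pow_nnnorm_pow_one_div_tendsto_nhds_spectralRadius A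
  have hev := ht.eventually (gt_mem_nhds hs1)
  have hpow : Filter.Tendsto (fun n : ℕ => s ^ n) Filter.atTop (nhds 0) :=
    ENNReal.tendsto_pow_atTop_nhds_zero_of_lt_one hs2
  have hhalf : (0 : ℝ≥0∞) < ENNReal.ofReal (1 / 2) := by simp
  have hev2 := hpow.eventually (gt_mem_nhds hhalf)
  obtain ⟨n, ⟨hn1, hn2⟩, hn3⟩ := ((hev.and hev2).and (Filter.eventually_ge_atTop 1)).exists
  refine ⟨n, ?_⟩
  have hn0 : (n : ℝ) ≠ 0 := by positivity
  have h1 : (‖A ^ n‖₊ : ℝ≥0∞) ≤ s ^ n := by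
    have := ENNReal.rpow_le_rpow hn1.le (z := (n : ℝ)) (by positivity)
    rwa [← ENNReal.rpow_mul, one_div, inv_mul_cancel₀ hn0, ENNReal.rpow_one,
      ENNReal.rpow_natCast] at this
  have h2 := h1.trans hn2.le
  rw [← enorm_eq_nnnorm, ← ofReal_norm, ENNReal.ofReal_le_ofReal_iff (by norm_num)] at h2
  exact h2

/-- A nonnegative matrix of spectral radius less than one strictly decreases some positive
weight vector. -/
lemma exists_weight {Q : ℕ} (hQ : 1 ≤ Q) (M : Matrix (Fin Q) (Fin Q) ℝ)
    (hM : ∀ i j, 0 ≤ M i j) (h : specRad M < 1) :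
    ∃ (w : Fin Q → ℝ) (c : ℝ), (∀ i, 0 < w i) ∧ 0 ≤ c ∧ c < 1 ∧
      ∀ i, ∑ j, M i j * w j ≤ c * w i := by
  have : Nonempty (Fin Q) := ⟨⟨0, hQ⟩⟩
  obtain ⟨n, hn⟩ := exists_pow_norm_le hQ M h
  have hpow : ∀ m : ℕ, ∀ i j, 0 ≤ (M ^ m) i j := by
    intro m
    induction m with
    | zero => intro i j; rw [pow_zero, Matrix.one_apply]; split_ifs <;> norm_num
    | succ m ih =>
      intro i j
      rw [pow_succ, Matrix.mul_apply]
      exact Finset.sum_nonneg fun k _ => mul_nonneg (ih i k) (hM k j)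
  have hrow : ∀ i, ∑ j, (M ^ n) i j ≤ 1 / 2 := by
    intro i
    refine le_trans ?_ hn
    have hmap : (M.map (Complex.ofReal ·)) ^ n = (M ^ n).map (Complex.ofReal ·) :=
      (map_pow (Complex.ofRealHom.mapMatrix (m := Fin Q)) M n).symm
    rw [hmap, Matrix.linfty_opNorm_def]
    have h1 : ∑ j, (M ^ n) i j =
        ((∑ j, ‖(M ^ n).map (Complex.ofReal ·) i j‖₊ : NNReal) : ℝ) := by
      push_cast
      refine Finset.sum_congr rfl fun j _ => ?_
      simp [abs_of_nonneg (hpow n i j)]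
    rw [h1]
    exact_mod_cast Finset.le_sup (f := fun i => ∑ j, ‖(M ^ n).map (Complex.ofReal ·) i j‖₊)
      (Finset.mem_univ i)
  set u : ℕ → Fin Q → ℝ := fun m i => ∑ j, (M ^ m) i j with hu
  have hstep : ∀ m i, ∑ j, M i j * u m j = u (m + 1) i := by
    intro m i
    simp only [hu, pow_succ', Matrix.mul_apply, Finset.mul_sum]
    rw [Finset.sum_comm]
  set w : Fin Q → ℝ := fun i => ∑ m ∈ Finset.range n, u m i with hw
  have hu0 : ∀ i, u 0 i = 1 := by
    intro i; simp [hu, Matrix.one_apply]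
  have hMw : ∀ i, ∑ j, M i j * w j = w i - 1 + u n i := by
    intro i
    have h1 : ∑ j, M i j * w j = ∑ m ∈ Finset.range n, u (m + 1) i := by
      simp only [hw, Finset.mul_sum]
      rw [Finset.sum_comm]
      exact Finset.sum_congr rfl fun m _ => hstep m i
    have h2 := Finset.sum_range_succ (fun m => u m i) n
    rw [Finset.sum_range_succ'] at h2
    simp only [hu0] at h2
    rw [h1]; simp only [hw]; linarith
  have hw1 : ∀ i, 1 / 2 ≤ w i := by
    intro i
    have h0 : 0 ≤ w i := Finset.sum_nonneg fun m _ =>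
      Finset.sum_nonneg fun j _ => hpow m i j
    have hn0 : n ≠ 0 := by
      rintro rfl
      have := hrow i
      have h3 := hu0 i
      simp only [hu] at h3
      linarith
    have h1 : u 0 i ≤ w i :=
      Finset.single_le_sum (f := fun m => u m i)
        (fun m _ => Finset.sum_nonneg fun j _ => hpow m i j)
        (Finset.mem_range.2 (Nat.pos_of_ne_zero hn0))
    rw [hu0] at h1; linarith
  set W : ℝ := ∑ i, w i with hW
  have hwW : ∀ i, w i ≤ W := fun i =>
    Finset.single_le_sum (f := w) (fun j _ => by linarith [hw1 j]) (Finset.mem_univ i)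
  have hW0 : 1 / 2 ≤ W := (hw1 ⟨0, hQ⟩).trans (hwW _)
  have hWpos : 0 < W := by linarith
  refine ⟨w, 1 - 1 / (2 * W), fun i => by linarith [hw1 i], ?_, ?_, ?_⟩
  · rw [sub_nonneg, div_le_one (by positivity)]; linarith
  · have : 0 < 1 / (2 * W) := by positivity
    linarith
  · intro i
    rw [hMw]
    have h1 : u n i ≤ 1 / 2 := hrow i
    have h2 : 1 / (2 * W) * w i ≤ 1 / 2 := by
      rw [div_mul_eq_mul_div, div_le_div_iff₀ (by positivity) (by norm_num)]
      linarith [hwW i]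
    linarith

end

/-- Comparison at an index where `d i / w i` is maximal. -/
lemma le_of_weight {Q : ℕ} {M : Matrix (Fin Q) (Fin Q) ℝ} (hM : ∀ i j, 0 ≤ M i j)
    {w : Fin Q → ℝ} {c : ℝ} (hw : ∀ i, 0 < w i)
    (hMw : ∀ i, ∑ j, M i j * w j ≤ c * w i) {d : Fin Q → ℝ} {l : ℝ}
    (hld : ∀ i, l * d i ≤ ∑ j, M i j * d j) {i₀ : Fin Q} (hi₀ : 0 < d i₀) : l ≤ c := by
  have : Nonempty (Fin Q) := ⟨i₀⟩
  obtain ⟨i, hi⟩ := Finite.exists_max fun i => d i / w i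
  have ht : 0 < d i / w i := (div_pos hi₀ (hw i₀)).trans_le (hi i₀)
  have hdi : 0 < d i := by
    have := mul_pos ht (hw i)
    rwa [div_mul_cancel₀ _ (hw i).ne'] at this
  have h1 : l * d i ≤ c * d i := by
    calc l * d i ≤ ∑ j, M i j * d j := hld i
      _ ≤ ∑ j, M i j * (d i / w i * w j) := by
          refine Finset.sum_le_sum fun j _ => mul_le_mul_of_nonneg_left ?_ (hM i j)
          exact (div_le_iff₀ (hw j)).1 (hi j)
      _ = d i / w i * ∑ j, M i j * w j := by
          rw [Finset.mul_sum]; exact Finset.sum_congr rfl fun j _ => by ring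
      _ ≤ d i / w i * (c * w i) := mul_le_mul_of_nonneg_left (hMw i) ht.le
      _ = c * d i := by field_simp [(hw i).ne']
  exact le_of_mul_le_mul_right h1 hdi

lemma specRad_le_of_weight {Q : ℕ} {M : Matrix (Fin Q) (Fin Q) ℝ} (hM : ∀ i j, 0 ≤ M i j)
    {w : Fin Q → ℝ} {c : ℝ} (hc : 0 ≤ c) (hw : ∀ i, 0 < w i)
    (hMw : ∀ i, ∑ j, M i j * w j ≤ c * w i) : specRad M ≤ c := by
  refine Real.sSup_le ?_ hc
  rintro _ ⟨z, hz, rfl⟩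
  rw [← Matrix.spectrum_toLin', ← Module.End.hasEigenvalue_iff_mem_spectrum] at hz
  obtain ⟨v, hv⟩ := hz.exists_hasEigenvector
  have hv0 : v ≠ 0 := hv.2
  have hv1 := hv.apply_eq_smul
  obtain ⟨i₀, hi₀⟩ := Function.ne_iff.1 hv0
  refine le_of_weight hM hw hMw (d := fun i => ‖v i‖) ?_ (i₀ := i₀) (norm_pos_iff.2 hi₀)
  intro i
  have h1 := congrFun hv1 i
  rw [Matrix.toLin'_apply, Matrix.mulVec, dotProduct] at h1
  have h2 : ‖z‖ * ‖v i‖ = ‖∑ j, (M.map (Complex.ofReal ·)) i j * v j‖ := by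
    rw [h1]; simp
  rw [h2]
  refine (norm_sum_le _ _).trans (le_of_eq ?_)
  refine Finset.sum_congr rfl fun j _ => ?_
  simp [abs_of_nonneg (hM i j)]

/-! ### The projection onto `[0, b]` -/

lemma proj_nonneg (x : ℝ) (b : ℝ≥0∞) : 0 ≤ proj x b := by
  unfold proj; split_ifs
  · exact le_max_left _ _
  · exact le_min ENNReal.toReal_nonneg (le_max_left _ _)

lemma ofReal_proj_le (x : ℝ) (b : ℝ≥0∞) : ENNReal.ofReal (proj x b) ≤ b := by
  unfold proj; split_ifs with h
  · simp [h]
  · exact ENNReal.ofReal_le_of_le_toReal (min_le_left _ _)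

lemma continuous_proj (b : ℝ≥0∞) : Continuous fun x => proj x b := by
  unfold proj; split_ifs <;> fun_prop

lemma proj_of_nonpos {x : ℝ} (hx : x ≤ 0) (b : ℝ≥0∞) : proj x b = 0 := by
  unfold proj; split_ifs <;> simp [max_eq_left hx]

/-- Variational inequality characterizing the projection onto `[0, b]`. -/
lemma proj_variational (x : ℝ) (b : ℝ≥0∞) {y : ℝ} (hy : 0 ≤ y)
    (hyb : ENNReal.ofReal y ≤ b) : (y - proj x b) * (x - proj x b) ≤ 0 := by
  unfold proj; split_ifs with h
  · rcases le_total x 0 with hx | hx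
    · rw [max_eq_left hx]; nlinarith
    · rw [max_eq_right hx]; simp
  · have hyb' : y ≤ b.toReal := (ENNReal.ofReal_le_iff_le_toReal h).1 hyb
    rcases le_total x 0 with hx | hx
    · rw [max_eq_left hx, min_eq_right ENNReal.toReal_nonneg]; nlinarith
    · rw [max_eq_right hx]
      rcases le_total b.toReal x with hbx | hbx
      · rw [min_eq_left hbx]; nlinarith
      · rw [min_eq_right hbx]; simp

/-- Firm nonexpansiveness of the projection. -/
lemma proj_firm (x y : ℝ) (b : ℝ≥0∞) :
    (proj x b - proj y b) ^ 2 ≤ (proj x b - proj y b) * (x - y) := by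
  have h1 := proj_variational x b (proj_nonneg y b) (ofReal_proj_le y b)
  have h2 := proj_variational y b (proj_nonneg x b) (ofReal_proj_le x b)
  nlinarith

namespace GameData

variable {Q N : ℕ}

/-! ### Waterfilling responses -/

lemma isWFResp.mem_stratSet {G : GameData Q N} {q : Fin Q} {p : Fin Q → Fin N → ℝ}
    {x : Fin N → ℝ} (h : G.isWFResp q p x) : x ∈ G.stratSet q := by
  obtain ⟨⟨μ, hμ⟩, hs⟩ := h
  refine ⟨fun k => ?_, hs.le⟩
  rw [hμ k]
  exact ⟨proj_nonneg _ _, ofReal_proj_le _ _⟩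

/-- The water level exists by the intermediate value theorem: the total power is continuous in
the level, vanishes for a low level, and reaches the budget for a high one. -/
lemma exists_isWFResp (hN : 1 ≤ N) (G : GameData Q N)
    (hbudget : ∀ q, (1 : ℝ≥0∞) < (1 / (N : ℝ≥0∞)) * ∑ k, G.pmax q k)
    (q : Fin Q) (p : Fin Q → Fin N → ℝ) : ∃ x, G.isWFResp q p x := by
  set a : Fin N → ℝ := fun k => G.gap q * G.interf q p k / ‖G.chan q q k‖ ^ 2 with ha
  set b := G.pmax q with hb
  set f : ℝ → ℝ := fun μ => ∑ k, proj (μ - a k) (b k) with hf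
  have hNpos : (0 : ℝ) < N := by exact_mod_cast hN
  have hcont : Continuous f := continuous_finsetSum _ fun k _ =>
    (continuous_proj (b k)).comp (by fun_prop)
  set hi : ℝ := ∑ k, (|a k| + (b k).toReal) + N with hhi
  have hterm : ∀ k, |a k| + (b k).toReal ≤ ∑ k, (|a k| + (b k).toReal) := fun k =>
    Finset.single_le_sum (f := fun k => |a k| + (b k).toReal)
      (fun j _ => add_nonneg (abs_nonneg _) ENNReal.toReal_nonneg) (Finset.mem_univ k)
  have hlo : f (-hi) = 0 := by
    refine Finset.sum_eq_zero fun k _ => proj_of_nonpos ?_ _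
    have := hterm k
    have h2 := neg_abs_le (a k)
    have h3 : 0 ≤ (b k).toReal := ENNReal.toReal_nonneg
    linarith
  have hhi_ge : (N : ℝ) ≤ f hi := by
    by_cases htop : ∃ k, b k = ⊤
    · obtain ⟨k, hk⟩ := htop
      have h1 : (N : ℝ) ≤ proj (hi - a k) (b k) := by
        rw [proj, if_pos hk]
        refine le_max_of_le_right ?_
        have := hterm k
        have h2 := le_abs_self (a k)
        have h3 : 0 ≤ (b k).toReal := ENNReal.toReal_nonneg
        linarith
      exact h1.trans (Finset.single_le_sum (f := fun k => proj (hi - a k) (b k))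
        (fun j _ => proj_nonneg _ _) (Finset.mem_univ k))
    · push Not at htop
      have h1 : ∀ k, proj (hi - a k) (b k) = (b k).toReal := by
        intro k
        rw [proj, if_neg (htop k)]
        refine min_eq_left (le_max_of_le_right ?_)
        have := hterm k
        have h2 := le_abs_self (a k)
        linarith
      have h2 : f hi = (∑ k, b k).toReal := by
        rw [ENNReal.toReal_sum fun k _ => htop k]
        exact Finset.sum_congr rfl fun k _ => h1 k
      rw [h2]
      have hfin : ∑ k, b k ≠ ⊤ := ENNReal.sum_ne_top.2 fun k _ => htop k
      have h3 := hbudget q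
      have h4 : (N : ℝ≥0∞) ≤ ∑ k, b k := by
        have hN0 : (N : ℝ≥0∞) ≠ 0 := by exact_mod_cast (by omega : N ≠ 0)
        have hNt : (N : ℝ≥0∞) ≠ ⊤ := ENNReal.natCast_ne_top N
        calc (N : ℝ≥0∞) = N * 1 := (mul_one _).symm
          _ ≤ N * ((1 / (N : ℝ≥0∞)) * ∑ k, b k) := by gcongr
          _ = ∑ k, b k := by
            rw [← mul_assoc, one_div, ENNReal.mul_inv_cancel hN0 hNt, one_mul]
      have h5 := ENNReal.toReal_mono hfin h4
      simpa using h5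
  have hle : -hi ≤ hi := by
    have : 0 ≤ ∑ k, (|a k| + (b k).toReal) := Finset.sum_nonneg fun j _ =>
      add_nonneg (abs_nonneg _) ENNReal.toReal_nonneg
    linarith
  obtain ⟨μ, -, hμ⟩ := intermediate_value_Icc hle hcont.continuousOn
    (show (N : ℝ) ∈ Set.Icc (f (-hi)) (f hi) from ⟨by rw [hlo]; exact hNpos.le, hhi_ge⟩)
  refine ⟨fun k => proj (μ - a k) (b k), ⟨μ, fun k => rfl⟩, ?_⟩
  have : ∑ k, proj (μ - a k) (b k) = N := hμ
  rw [this, one_div, inv_mul_cancel₀ hNpos.ne']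

lemma interf_update (G : GameData Q N) (q : Fin Q) (p : Fin Q → Fin N → ℝ) (y : Fin N → ℝ)
    (k : Fin N) : G.interf q (Function.update p q y) k = G.interf q p k := by
  unfold interf
  congr 1
  refine Finset.sum_congr rfl fun r hr => ?_
  rw [Function.update_of_ne (Finset.ne_of_mem_erase hr)]

lemma interf_pos {G : GameData Q N} {q : Fin Q} {p : Fin Q → Fin N → ℝ}
    (hp : G.otherStrats q p) (k : Fin N) : 0 < G.interf q p k := by
  unfold interf
  have : 0 ≤ ∑ r ∈ Finset.univ.erase q, ‖G.chan r q k‖ ^ 2 * p r k :=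
    Finset.sum_nonneg fun r hr => mul_nonneg (by positivity)
      ((hp r (Finset.ne_of_mem_erase hr)).1 k).1
  linarith

lemma payoff_update (G : GameData Q N) (q : Fin Q) (p : Fin Q → Fin N → ℝ)
    (y : Fin N → ℝ) :
    G.payoff q (Function.update p q y) = (1 / (N : ℝ)) * ∑ k, Real.log (1 +
      y k / (G.gap q * G.interf q p k / ‖G.chan q q k‖ ^ 2)) := by
  unfold payoff
  congr 1
  refine Finset.sum_congr rfl fun k _ => ?_
  rw [interf_update, Function.update_self]
  congr 2
  have hg : G.gap q ≠ 0 := by linarith [G.one_le_gap q]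
  have hc : ‖G.chan q q k‖ ≠ 0 := norm_ne_zero_iff.2 (G.chan_diag_ne q k)
  rw [div_div_eq_mul_div, one_div, mul_comm (y k), inv_mul_eq_div, div_div]

/-- A waterfilling response strictly beats every other admissible strategy. -/
lemma payoff_lt_of_isWFResp (hN : 1 ≤ N) {G : GameData Q N} {q : Fin Q}
    {p : Fin Q → Fin N → ℝ} (hp : G.otherStrats q p) {x y : Fin N → ℝ}
    (hx : G.isWFResp q p x) (hy : y ∈ G.stratSet q) (hne : y ≠ x) :
    G.payoff q (Function.update p q y) < G.payoff q (Function.update p q x) := by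
  have hNpos : (0 : ℝ) < N := by exact_mod_cast hN
  have hxS := hx.mem_stratSet
  obtain ⟨⟨μ, hμ⟩, hs⟩ := hx
  set a : Fin N → ℝ := fun k => G.gap q * G.interf q p k / ‖G.chan q q k‖ ^ 2 with ha
  have hapos : ∀ k, 0 < a k := fun k => by
    have h1 : 0 < ‖G.chan q q k‖ := norm_pos_iff.2 (G.chan_diag_ne q k)
    have h2 : 0 < G.gap q := by linarith [G.one_le_gap q]
    have h3 := interf_pos hp k
    simp only [ha]; positivity
  have hsum : ∑ k, x k = N := by
    rw [one_div, inv_mul_eq_div, div_eq_one_iff_eq hNpos.ne'] at hs; exact hs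
  have hysum : ∑ k, y k ≤ N := by
    have := hy.2
    rw [one_div, inv_mul_eq_div, div_le_one hNpos] at this; exact this
  have hμpos : 0 < μ := by
    by_contra hcon
    have h0 : ∑ k, x k = 0 := Finset.sum_eq_zero fun k _ => by
      rw [hμ k]; exact proj_of_nonpos (by have := hapos k; simp only [ha] at this; linarith) _
    linarith
  have hx0 : ∀ k, 0 ≤ x k := fun k => (hxS.1 k).1
  have hy0 : ∀ k, 0 ≤ y k := fun k => (hy.1 k).1
  have hvar : ∀ k, (y k - x k) / (a k + x k) ≤ (y k - x k) / μ := by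
    intro k
    have h1 := proj_variational (μ - a k) (G.pmax q k) (hy.1 k).1 (hy.1 k).2
    have h2 : proj (μ - a k) (G.pmax q k) = x k := (hμ k).symm
    rw [h2] at h1
    have h3 := hapos k
    have h4 := hx0 k
    rw [div_le_div_iff₀ (by linarith) hμpos]
    nlinarith
  have hratio : ∀ k, Real.log (1 + y k / a k) - Real.log (1 + x k / a k)
      = Real.log ((a k + y k) / (a k + x k)) := by
    intro k
    have h1 := hapos k
    have h2 := hx0 k
    have h3 := hy0 k
    rw [← Real.log_div (by positivity) (by positivity)]
    congr 1
    field_simp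
  have hsub : ∀ k, (a k + y k) / (a k + x k) - 1 = (y k - x k) / (a k + x k) := by
    intro k
    have h1 := hapos k
    have h2 := hx0 k
    have h3 : a k + x k ≠ 0 := by positivity
    field_simp
    ring
  have hpos : ∀ k, 0 < (a k + y k) / (a k + x k) := fun k => by
    have h1 := hapos k
    have h2 := hx0 k
    have h3 := hy0 k
    positivity
  have hle : ∀ k, Real.log (1 + y k / a k) - Real.log (1 + x k / a k) ≤ (y k - x k) / μ := by
    intro k
    rw [hratio]
    refine (Real.log_le_sub_one_of_pos (hpos k)).trans ?_
    rw [hsub]; exact hvar k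
  obtain ⟨k₀, hk₀⟩ := Function.ne_iff.1 hne
  have hlt : Real.log (1 + y k₀ / a k₀) - Real.log (1 + x k₀ / a k₀) < (y k₀ - x k₀) / μ := by
    rw [hratio]
    refine (Real.log_lt_sub_one_of_pos (hpos k₀) ?_).trans_le ?_
    · intro h
      have h3 := hsub k₀
      rw [h, sub_self, eq_comm, div_eq_zero_iff] at h3
      have h1 := hapos k₀
      have h2 := hx0 k₀
      rcases h3 with h3 | h3
      · exact hk₀ (by linarith)
      · linarith
    · rw [hsub]; exact hvar k₀
  have htot := Finset.sum_lt_sum (fun k _ => hle k) ⟨k₀, Finset.mem_univ _, hlt⟩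
  rw [Finset.sum_sub_distrib, ← Finset.sum_div, Finset.sum_sub_distrib, hsum] at htot
  have hneg : (∑ k, y k - N) / μ ≤ 0 := div_nonpos_of_nonpos_of_nonneg (by linarith) hμpos.le
  rw [payoff_update, payoff_update]
  refine mul_lt_mul_of_pos_left ?_ (by positivity)
  simp only [ha] at htot
  linarith

lemma isNE_iff (hN : 1 ≤ N) (G : GameData Q N)
    (hbudget : ∀ q, (1 : ℝ≥0∞) < (1 / (N : ℝ≥0∞)) * ∑ k, G.pmax q k)
    (p : Fin Q → Fin N → ℝ) : G.isNE p ↔ ∀ q, G.isWFResp q p (p q) := by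
  constructor
  · rintro ⟨hS, hbest⟩ q
    have hp : G.otherStrats q p := fun r _ => hS r
    obtain ⟨x, hx⟩ := exists_isWFResp hN G hbudget q p
    by_cases h : p q = x
    · rwa [h]
    · have h1 := payoff_lt_of_isWFResp hN hp hx (hS q) h
      have h2 := hbest q x hx.mem_stratSet
      rw [Function.update_eq_self] at h1
      exact absurd h1 (not_lt.2 h2)
  · intro h
    have hS : ∀ q, p q ∈ G.stratSet q := fun q => (h q).mem_stratSet
    refine ⟨hS, fun q y hy => ?_⟩
    by_cases hyq : y = p q
    · rw [hyq, Function.update_eq_self]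
    · have h1 := payoff_lt_of_isWFResp hN (fun r _ => hS r) (h q) hy hyq
      rw [Function.update_eq_self] at h1
      exact h1.le

/-! ### The matrix `H^max` -/

lemma ratio_nonneg (G : GameData Q N) (q r : Fin Q) (k : Fin N) :
    0 ≤ G.gap q * ‖G.chan r q k‖ ^ 2 / ‖G.chan q q k‖ ^ 2 := by
  have : 0 ≤ G.gap q := by linarith [G.one_le_gap q]
  positivity

lemma Hmax_nonneg (G : GameData Q N) (q r : Fin Q) : 0 ≤ G.Hmax q r := by
  unfold Hmax
  split_ifs
  · refine Real.sSup_nonneg ?_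
    rintro _ ⟨k, -, rfl⟩
    exact G.ratio_nonneg q r k
  · exact le_rfl

lemma ratio_le_Hmax (G : GameData Q N) {q r : Fin Q} (hrq : r ≠ q) {k : Fin N}
    (hq : k ∈ G.Dset q) (hr : k ∈ G.Dset r) :
    G.gap q * ‖G.chan r q k‖ ^ 2 / ‖G.chan q q k‖ ^ 2 ≤ G.Hmax q r := by
  unfold Hmax
  rw [if_pos hrq]
  exact le_csSup ((Set.toFinite _).image _).bddAbove ⟨k, ⟨hq, hr⟩, rfl⟩

lemma Hmat_nonneg (G : GameData Q N) (k : Fin N) (q r : Fin Q) : 0 ≤ G.Hmat k q r := by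
  unfold Hmat
  split_ifs
  · exact G.ratio_nonneg q r k
  · exact le_rfl

lemma Hmat_le_Hmax (G : GameData Q N) (k : Fin N) (q r : Fin Q) :
    G.Hmat k q r ≤ G.Hmax q r := by
  unfold Hmat
  split_ifs with h
  · exact G.ratio_le_Hmax h.1 h.2.1 h.2.2
  · exact G.Hmax_nonneg q r

/-! ### Contraction of the waterfilling map -/

/-- Admissible profiles in which each user only loads carriers of its set `D_q`. Waterfilling
responses stay in this set, and `H^max` controls the interference there. -/
def goodSet (G : GameData Q N) : Set (Fin Q → Fin N → ℝ) :=
  { p | ∀ q, p q ∈ G.stratSet q ∧ ∀ k, k ∉ G.Dset q → p q k = 0 }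

/-- Euclidean distance of two power vectors, on the plain function type. -/
noncomputable def eucDist (x y : Fin N → ℝ) : ℝ := √(∑ k, (x k - y k) ^ 2)

lemma isWFResp.eq_zero {G : GameData Q N} {q : Fin Q} {p : Fin Q → Fin N → ℝ}
    {x : Fin N → ℝ} (hp : G.otherStrats q p) (h : G.isWFResp q p x) {k : Fin N}
    (hk : k ∉ G.Dset q) : x k = 0 := by
  by_contra hne
  exact hk ⟨p, x, hp, h, hne⟩

lemma wf_lipschitz {G : GameData Q N} {q : Fin Q}
    {p p' : Fin Q → Fin N → ℝ} (hp : p ∈ G.goodSet) (hp' : p' ∈ G.goodSet)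
    {x x' : Fin N → ℝ} (hx : G.isWFResp q p x) (hx' : G.isWFResp q p' x') :
    eucDist x x' ≤ ∑ r, G.Hmax q r * eucDist (p r) (p' r) := by
  have hz : ∀ k, k ∉ G.Dset q → x k = 0 := fun k => hx.eq_zero fun r _ => (hp r).1
  have hz' : ∀ k, k ∉ G.Dset q → x' k = 0 := fun k => hx'.eq_zero fun r _ => (hp' r).1
  obtain ⟨⟨μ, hμ⟩, hs⟩ := hx
  obtain ⟨⟨ν, hν⟩, hs'⟩ := hx'
  rcases Nat.eq_zero_or_pos N with hN0 | hN0
  · subst hN0; simp at hs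
  have hNpos : (0 : ℝ) < N := by exact_mod_cast hN0
  have hsum : ∑ k, (x k - x' k) = 0 := by
    rw [Finset.sum_sub_distrib, sub_eq_zero]
    exact mul_left_cancel₀ (by positivity) (hs.trans hs'.symm)
  have hinterf : ∀ k, G.gap q * G.interf q p' k / ‖G.chan q q k‖ ^ 2 -
      G.gap q * G.interf q p k / ‖G.chan q q k‖ ^ 2 =
      ∑ r ∈ Finset.univ.erase q,
        G.gap q * ‖G.chan r q k‖ ^ 2 / ‖G.chan q q k‖ ^ 2 * (p' r k - p r k) := by
    intro k
    rw [← sub_div, ← mul_sub]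
    unfold interf
    rw [add_sub_add_left_eq_sub, ← Finset.sum_sub_distrib, Finset.mul_sum, Finset.sum_div]
    exact Finset.sum_congr rfl fun r _ => by ring
  have hpt : ∀ k, (x k - x' k) ^ 2 ≤ (μ - ν) * (x k - x' k) +
      ∑ r, G.Hmax q r * (|x k - x' k| * |p r k - p' r k|) := by
    intro k
    by_cases hk : k ∈ G.Dset q
    · have h1 := proj_firm (μ - G.gap q * G.interf q p k / ‖G.chan q q k‖ ^ 2)
        (ν - G.gap q * G.interf q p' k / ‖G.chan q q k‖ ^ 2) (G.pmax q k)
      rw [← hμ k, ← hν k] at h1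
      have h2 : (x k - x' k) * (G.gap q * G.interf q p' k / ‖G.chan q q k‖ ^ 2 -
          G.gap q * G.interf q p k / ‖G.chan q q k‖ ^ 2) ≤
          ∑ r, G.Hmax q r * (|x k - x' k| * |p r k - p' r k|) := by
        rw [hinterf, Finset.mul_sum]
        refine le_trans (Finset.sum_le_sum fun r hr => ?_)
          (Finset.sum_le_sum_of_subset_of_nonneg (Finset.subset_univ (Finset.univ.erase q))
            fun r _ _ => mul_nonneg (G.Hmax_nonneg q r) (by positivity))
        have hrq := Finset.ne_of_mem_erase hr
        by_cases hkr : k ∈ G.Dset r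
        · have h3 := G.ratio_le_Hmax hrq hk hkr
          have h4 := G.ratio_nonneg q r k
          calc _ ≤ |(x k - x' k) * (G.gap q * ‖G.chan r q k‖ ^ 2 / ‖G.chan q q k‖ ^ 2 *
                (p' r k - p r k))| := le_abs_self _
            _ = G.gap q * ‖G.chan r q k‖ ^ 2 / ‖G.chan q q k‖ ^ 2 *
                (|x k - x' k| * |p r k - p' r k|) := by
              rw [abs_mul, abs_mul, abs_of_nonneg h4, abs_sub_comm (p' r k)]; ring
            _ ≤ _ := mul_le_mul_of_nonneg_right h3 (by positivity)
        · rw [(hp r).2 k hkr, (hp' r).2 k hkr]; simp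
      linarith
    · rw [hz k hk, hz' k hk]; simp
  set D : ℝ := eucDist x x' with hD
  have hDsq : D ^ 2 = ∑ k, (x k - x' k) ^ 2 :=
    Real.sq_sqrt (Finset.sum_nonneg fun k _ => sq_nonneg _)
  have hD0 : 0 ≤ D := Real.sqrt_nonneg _
  have hcs : ∀ r, ∑ k, |x k - x' k| * |p r k - p' r k| ≤ D * eucDist (p r) (p' r) := by
    intro r
    have h := Real.sum_mul_le_sqrt_mul_sqrt Finset.univ
      (fun k => |x k - x' k|) (fun k => |p r k - p' r k|)
    simp only [sq_abs] at h
    exact h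
  have hmain : D ^ 2 ≤ D * ∑ r, G.Hmax q r * eucDist (p r) (p' r) := by
    calc D ^ 2 = ∑ k, (x k - x' k) ^ 2 := hDsq
      _ ≤ ∑ k, ((μ - ν) * (x k - x' k) +
          ∑ r, G.Hmax q r * (|x k - x' k| * |p r k - p' r k|)) :=
        Finset.sum_le_sum fun k _ => hpt k
      _ = ∑ r, G.Hmax q r * ∑ k, |x k - x' k| * |p r k - p' r k| := by
        rw [Finset.sum_add_distrib, ← Finset.mul_sum, hsum, mul_zero, zero_add,
          Finset.sum_comm]
        exact Finset.sum_congr rfl fun r _ => (Finset.mul_sum _ _ _).symm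
      _ ≤ ∑ r, G.Hmax q r * (D * eucDist (p r) (p' r)) :=
        Finset.sum_le_sum fun r _ => mul_le_mul_of_nonneg_left (hcs r) (G.Hmax_nonneg q r)
      _ = D * ∑ r, G.Hmax q r * eucDist (p r) (p' r) := by
        rw [Finset.mul_sum]; exact Finset.sum_congr rfl fun r _ => by ring
  rcases hD0.eq_or_lt with h0 | h0
  · rw [← h0]
    exact Finset.sum_nonneg fun r _ => mul_nonneg (G.Hmax_nonneg q r) (Real.sqrt_nonneg _)
  · rw [sq] at hmain
    exact le_of_mul_le_mul_left hmain h0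

lemma isClosed_goodSet (G : GameData Q N) : IsClosed G.goodSet := by
  have : G.goodSet = ⋂ q, ({p | ∀ k, 0 ≤ p q k ∧ ENNReal.ofReal (p q k) ≤ G.pmax q k} ∩
      {p | (1 / (N : ℝ)) * ∑ k, p q k ≤ 1} ∩ {p | ∀ k, k ∉ G.Dset q → p q k = 0}) := by
    ext p
    simp [goodSet, stratSet]
  rw [this]
  refine isClosed_iInter fun q => ((?_ : IsClosed _).inter ?_).inter ?_
  · simp only [Set.ofPred_forall]
    refine isClosed_iInter fun k => ?_
    have h1 : IsClosed {p : Fin Q → Fin N → ℝ | 0 ≤ p q k} :=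
      isClosed_le (by fun_prop) (by fun_prop)
    have h2 : IsClosed {p : Fin Q → Fin N → ℝ | ENNReal.ofReal (p q k) ≤ G.pmax q k} :=
      isClosed_le (ENNReal.continuous_ofReal.comp (by fun_prop)) (by fun_prop)
    exact h1.inter h2
  · exact isClosed_le (by fun_prop) (by fun_prop)
  · simp only [Set.ofPred_forall]
    exact isClosed_iInter fun k => isClosed_iInter fun _ =>
      isClosed_eq (by fun_prop) (by fun_prop)

lemma zero_mem_goodSet (G : GameData Q N) : (fun _ _ => 0) ∈ G.goodSet := by
  intro q
  simp [stratSet]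

/-- Banach's fixed point theorem for the waterfilling map. The weights are absorbed into the
variables, `p_r = w_r x_r`, so that the weighted maximum norm becomes the product metric of
Euclidean spaces. -/
lemma exists_fixed (hN : 1 ≤ N) (G : GameData Q N)
    (hbudget : ∀ q, (1 : ℝ≥0∞) < (1 / (N : ℝ≥0∞)) * ∑ k, G.pmax q k)
    {w : Fin Q → ℝ} {c : ℝ} (hw : ∀ i, 0 < w i) (hc : 0 ≤ c) (hc1 : c < 1)
    (hMw : ∀ i, ∑ j, G.Hmax i j * w j ≤ c * w i) :
    ∃ p : Fin Q → Fin N → ℝ, ∀ q, G.isWFResp q p (p q) := by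
  choose F hF using fun p q => exists_isWFResp hN G hbudget q p
  let u : (Fin Q → EuclideanSpace ℝ (Fin N)) → Fin Q → Fin N → ℝ := fun x r k => w r * x r k
  let T : (Fin Q → EuclideanSpace ℝ (Fin N)) → Fin Q → EuclideanSpace ℝ (Fin N) :=
    fun x q => WithLp.toLp 2 fun k => (w q)⁻¹ * F (u x) q k
  have huT : ∀ x, u (T x) = F (u x) := by
    intro x; funext q k
    simp only [u, T]
    rw [mul_inv_cancel_left₀ (hw q).ne']
  have hucont : Continuous u := by
    refine continuous_pi fun r => continuous_pi fun k => ?_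
    simp only [u]
    fun_prop
  have hdist : ∀ x y : Fin Q → EuclideanSpace ℝ (Fin N), ∀ r,
      eucDist (u x r) (u y r) = w r * dist (x r) (y r) := by
    intro x y r
    rw [EuclideanSpace.dist_eq, eucDist]
    have h1 : ∑ k, (u x r k - u y r k) ^ 2 = w r ^ 2 * ∑ k, dist (x r k) (y r k) ^ 2 := by
      rw [Finset.mul_sum]
      refine Finset.sum_congr rfl fun k _ => ?_
      rw [Real.dist_eq, sq_abs]; simp only [u]; ring
    rw [h1, Real.sqrt_mul (sq_nonneg _), Real.sqrt_sq (hw r).le]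
  let S : Set (Fin Q → EuclideanSpace ℝ (Fin N)) := u ⁻¹' G.goodSet
  have hScomp : IsComplete S := (G.isClosed_goodSet.preimage hucont).isComplete
  have hmaps : Set.MapsTo T S S := by
    intro x hx
    change u (T x) ∈ G.goodSet
    rw [huT]
    exact fun q => ⟨(hF (u x) q).mem_stratSet,
      fun k hk => (hF (u x) q).eq_zero (fun r _ => (hx r).1) hk⟩
  have hcontr : ContractingWith ⟨c, hc⟩ (hmaps.restrict T S S) := by
    refine ⟨by exact_mod_cast hc1, LipschitzWith.of_dist_le_mul ?_⟩
    rintro ⟨x, hx⟩ ⟨y, hy⟩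
    change dist (T x) (T y) ≤ c * dist x y
    refine (dist_pi_le_iff (by positivity)).2 fun q => ?_
    have h1 := wf_lipschitz hx hy (hF (u x) q) (hF (u y) q)
    rw [← huT, ← huT, hdist] at h1
    have h2 : ∑ r, G.Hmax q r * eucDist (u x r) (u y r) ≤ c * w q * dist x y := by
      calc _ ≤ ∑ r, G.Hmax q r * w r * dist x y := by
            refine Finset.sum_le_sum fun r _ => ?_
            rw [hdist, mul_assoc]
            refine mul_le_mul_of_nonneg_left ?_ (G.Hmax_nonneg q r)
            exact mul_le_mul_of_nonneg_left (dist_le_pi_dist x y r) (hw r).le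
        _ = (∑ r, G.Hmax q r * w r) * dist x y := (Finset.sum_mul _ _ _).symm
        _ ≤ _ := mul_le_mul_of_nonneg_right (hMw q) dist_nonneg
    have h3 := h1.trans h2
    refine le_of_mul_le_mul_left (h3.trans (le_of_eq ?_)) (hw q)
    ring
  have h0 : (0 : Fin Q → EuclideanSpace ℝ (Fin N)) ∈ S := by
    change u 0 ∈ G.goodSet
    have : u 0 = fun _ _ => 0 := by funext r k; simp [u]
    rw [this]; exact G.zero_mem_goodSet
  obtain ⟨x, -, hx, -⟩ := hcontr.exists_fixedPoint' hScomp hmaps h0 (edist_ne_top _ _)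
  have hfix : u x = F (u x) := by
    conv_lhs => rw [← hx.eq]
    exact huT x
  refine ⟨u x, fun q => ?_⟩
  have h := hF (u x) q
  rwa [← hfix] at h

lemma fixed_unique {G : GameData Q N} {w : Fin Q → ℝ} {c : ℝ}
    (hw : ∀ i, 0 < w i) (hc1 : c < 1) (hMw : ∀ i, ∑ j, G.Hmax i j * w j ≤ c * w i)
    {p p' : Fin Q → Fin N → ℝ} (hp : ∀ q, G.isWFResp q p (p q))
    (hp' : ∀ q, G.isWFResp q p' (p' q)) : p = p' := by
  have good : ∀ {p : Fin Q → Fin N → ℝ}, (∀ q, G.isWFResp q p (p q)) → p ∈ G.goodSet :=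
    fun h q => ⟨(h q).mem_stratSet, fun k hk =>
      (h q).eq_zero (fun r _ => (h r).mem_stratSet) hk⟩
  by_contra hne
  obtain ⟨q, hq⟩ := Function.ne_iff.1 hne
  obtain ⟨k, hk⟩ := Function.ne_iff.1 hq
  have hpos : 0 < eucDist (p q) (p' q) := by
    refine Real.sqrt_pos.2 (Finset.sum_pos' (fun k _ => sq_nonneg _) ⟨k, Finset.mem_univ _, ?_⟩)
    have := sub_ne_zero.2 hk
    positivity
  have h1 : (1 : ℝ) ≤ c := le_of_weight G.Hmax_nonneg hw hMw
    (d := fun q => eucDist (p q) (p' q))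
    (fun i => by rw [one_mul]; exact wf_lipschitz (good hp) (good hp') (hp i) (hp' i)) hpos
  linarith

end GameData

end NCGame

/-- **Corollary 1 (condition C2 is sufficient for condition C1).** If `ρ(H^max) < 1`, then
`ρ(H(k)) < 1` for every carrier `k`; consequently game `G` admits exactly one Nash
equilibrium. -/
theorem NCGame.Hmax_cond_implies_unique_NE (Q N : ℕ) (hQ : 1 ≤ Q) (hN : 1 ≤ N)
    (G : NCGame.GameData Q N)
    (hbudget : ∀ q, (1 : ℝ≥0∞) < (1 / (N : ℝ≥0∞)) * ∑ k, G.pmax q k)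
    (hρ : NCGame.specRad G.Hmax < 1) :
    (∀ k : Fin N, NCGame.specRad (G.Hmat k) < 1) ∧
    ∃! p : Fin Q → Fin N → ℝ, G.isNE p := by
  obtain ⟨w, c, hw, hc, hc1, hMw⟩ := NCGame.exists_weight hQ G.Hmax G.Hmax_nonneg hρ
  constructor
  · intro k
    refine (NCGame.specRad_le_of_weight (G.Hmat_nonneg k) hc hw fun i => ?_).trans_lt hc1
    exact (Finset.sum_le_sum fun j _ =>
      mul_le_mul_of_nonneg_right (G.Hmat_le_Hmax k i j) (hw j).le).trans (hMw i)
  · obtain ⟨p, hp⟩ := G.exists_fixed hN hbudget hw hc hc1 hMw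
    refine ⟨p, (G.isNE_iff hN hbudget p).2 hp, fun p' hp' => ?_⟩
    exact NCGame.GameData.fixed_unique hw hc1 hMw ((G.isNE_iff hN hbudget p').1 hp') hp
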